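/- Let M be the 27 × 27 integer matrix obtained by stacking vertically the three Kronecker products r ⊗ I₃ ⊗ I₃, I₃ ⊗ r ⊗ I₃, and I₃ ⊗ I₃ ⊗ r, where I₃ is the 3 × 3 identity matrix and r = (1, 1, 1). Let x_p = (1,0,0,0,52,0,0,0,2,0,52,0,52,2652,106,0,106,0,0,0,2,0,106,0,2,0,0) ∈ ℤ²⁷. Then the set of vectors x ∈ ℤ²⁷ with all coordinates nonnegative satisfying M x = M x_p, x₂₇ = 0, and x₉ ≤ 2, x₁₈ ≤ 2, x₂₁ ≤ 2, x₂₄ ≤ 2, x₂₅ ≤ 2, x₂₆ ≤ 2 has exactly 122 elements. -/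

import Mathlib

/-!
Regard `x` as a 3 × 3 × 3 array; `M x` lists the sums of `x` along its 27 axis-parallel lines. An
array with given line sums is determined by its entries off the three middle slices, that is, by
its eight corners. Here `x₂₇ = 0`; write `e = x₁`, let `u, v, w` be the corners `x₃, x₇, x₁₉`
adjacent to `x₁`, and `a, b, c` the corners `x₉, x₂₁, x₂₅` adjacent to `x₂₇`. The three edges of
the cube at `x₁` have line sum 1 and the other nine have line sum 2, while all remaining line sums
are at least 52, so large that the face centres and the body centre are nonnegative as soon as the
entries on the edges are. Nonnegativity therefore amounts to

* `e, u, v, w ≥ 0` and `e + u, e + v, e + w ≤ 1`;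
* `0 ≤ a ≤ 2 - max u v`, `0 ≤ b ≤ 2 - max u w` and `0 ≤ c ≤ 2 - max v w`.

Summing `(3 - max u v) (3 - max u w) (3 - max v w)` over the nine admissible `(e, u, v, w)` gives 27
for `e = 1`, and `27 + 3 * 12 + 3 * 8 + 8 = 95` for `e = 0`, the terms corresponding to 0, 1, 2 or 3
ones among `u, v, w`.
-/

open Matrix Kronecker

/-- The 1 × 3 all-ones row vector `r = (1, 1, 1)`. -/
def rOnes : Matrix (Fin 1) (Fin 3) ℤ := Matrix.of fun _ _ => 1

/-- Lexicographic identification of index triples `(i₁, i₂, i₃)` with `Fin 27`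
(first coordinate most significant), matching the lexicographic ordering of the triples
`(i₁, i₂, i₃) ∈ {1, 2, 3}³` used to index the 27 coordinates. -/
def colEquiv : (Fin 3 × Fin 3) × Fin 3 ≃ Fin 27 :=
  (Equiv.prodCongr finProdFinEquiv (Equiv.refl (Fin 3))).trans finProdFinEquiv

def rowEquiv1 : (Fin 1 × Fin 3) × Fin 3 ≃ Fin 9 :=
  (Equiv.prodCongr finProdFinEquiv (Equiv.refl (Fin 3))).trans finProdFinEquiv

def rowEquiv2 : (Fin 3 × Fin 1) × Fin 3 ≃ Fin 9 :=
  (Equiv.prodCongr finProdFinEquiv (Equiv.refl (Fin 3))).trans finProdFinEquiv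

def rowEquiv3 : (Fin 3 × Fin 3) × Fin 1 ≃ Fin 9 :=
  (Equiv.prodCongr finProdFinEquiv (Equiv.refl (Fin 1))).trans finProdFinEquiv

/-- The 27 × 27 matrix obtained by stacking vertically the three Kronecker products
`r ⊗ I₃ ⊗ I₃`, `I₃ ⊗ r ⊗ I₃` and `I₃ ⊗ I₃ ⊗ r`, where `I₃` is the 3 × 3 identity matrix and
`r = (1, 1, 1)` is the 1 × 3 all-ones row, with columns indexed lexicographically by triples. -/
def M : Matrix (Fin 27) (Fin 27) ℤ :=
  Matrix.reindex
    ((rowEquiv1.sumCongr (rowEquiv2.sumCongr rowEquiv3)).trans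
      (((Equiv.refl (Fin 9)).sumCongr finSumFinEquiv).trans finSumFinEquiv))
    colEquiv
    (Matrix.fromRows
      (rOnes ⊗ₖ (1 : Matrix (Fin 3) (Fin 3) ℤ) ⊗ₖ (1 : Matrix (Fin 3) (Fin 3) ℤ))
      (Matrix.fromRows
        ((1 : Matrix (Fin 3) (Fin 3) ℤ) ⊗ₖ rOnes ⊗ₖ (1 : Matrix (Fin 3) (Fin 3) ℤ))
        ((1 : Matrix (Fin 3) (Fin 3) ℤ) ⊗ₖ (1 : Matrix (Fin 3) (Fin 3) ℤ) ⊗ₖ rOnes)))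

/-- The particular solution of block 222 (coordinates indexed lexicographically by triples,
coordinate 27 corresponding to (3,3,3)). -/
def xp : Fin 27 → ℤ := ![1,0,0,0,52,0,0,0,2,0,52,0,52,2652,106,0,106,0,0,0,2,0,106,0,2,0,0]

section KroneckerMulVec

variable {R l m n p : Type*} [NonAssocSemiring R] [Fintype m] [Fintype n] [Fintype p]

lemma kronecker_one_kronecker_one_mulVec [DecidableEq n] [DecidableEq p] (A : Matrix l m R)
    (y : (m × n) × p → R) :
    (A ⊗ₖ (1 : Matrix n n R) ⊗ₖ (1 : Matrix p p R)) *ᵥ y =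
      fun q => ∑ i, A q.1.1 i * y ((i, q.1.2), q.2) := by
  ext q
  simp [mulVec, dotProduct, Fintype.sum_prod_type, one_apply]

lemma one_kronecker_kronecker_one_mulVec [DecidableEq m] [DecidableEq p] (A : Matrix l n R)
    (y : (m × n) × p → R) :
    ((1 : Matrix m m R) ⊗ₖ A ⊗ₖ (1 : Matrix p p R)) *ᵥ y =
      fun q => ∑ j, A q.1.2 j * y ((q.1.1, j), q.2) := by
  ext q
  simp [mulVec, dotProduct, Fintype.sum_prod_type, one_apply]

lemma one_kronecker_one_kronecker_mulVec [DecidableEq m] [DecidableEq n] (A : Matrix l p R)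
    (y : (m × n) × p → R) :
    ((1 : Matrix m m R) ⊗ₖ (1 : Matrix n n R) ⊗ₖ A) *ᵥ y =
      fun q => ∑ k, A q.2 k * y (q.1, k) := by
  ext q
  simp [mulVec, dotProduct, Fintype.sum_prod_type, one_apply]

end KroneckerMulVec

section LineSums

variable {α β γ G : Type*} [Fintype α] [Fintype β] [Fintype γ]

/-- Two three-dimensional arrays have the same sum along every axis-parallel line. -/
def SameLineSums [AddCommMonoid G] (f g : α → β → γ → G) : Prop :=
  (∀ j k, ∑ i, f i j k = ∑ i, g i j k) ∧
    (∀ i k, ∑ j, f i j k = ∑ j, g i j k) ∧ ∀ i j, ∑ k, f i j k = ∑ k, g i j k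

lemma eq_of_sum_eq_of_forall_ne [AddCancelCommMonoid G] {f g : α → G} (a : α)
    (hsum : ∑ i, f i = ∑ i, g i) (hne : ∀ i, i ≠ a → f i = g i) : f = g := by
  classical
  ext i
  obtain rfl | hi := eq_or_ne i a
  · rw [Fintype.sum_eq_add_sum_compl i f, Fintype.sum_eq_add_sum_compl i g,
      Finset.sum_congr rfl fun j hj => hne j (by simpa using hj)] at hsum
    exact add_right_cancel hsum
  · exact hne i hi

lemma SameLineSums.eq_of_forall_ne [AddCancelCommMonoid G] {f g : α → β → γ → G}
    (h : SameLineSums f g) (a : α) (b : β) (c : γ)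
    (hne : ∀ i j k, i ≠ a → j ≠ b → k ≠ c → f i j k = g i j k) : f = g := by
  obtain ⟨hα, hβ, hγ⟩ := h
  have hab : ∀ i j, i ≠ a → j ≠ b → ∀ k, f i j k = g i j k := fun i j hi hj =>
    congrFun (eq_of_sum_eq_of_forall_ne c (hγ i j) fun k hk => hne i j k hi hj hk)
  have ha : ∀ i, i ≠ a → ∀ j k, f i j k = g i j k := fun i hi j k =>
    congrFun (eq_of_sum_eq_of_forall_ne b (hβ i k) fun j hj => hab i j hi hj k) j
  ext i j k
  exact congrFun (eq_of_sum_eq_of_forall_ne a (hα j k) fun i hi => ha i hi j k) i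

end LineSums

/-- The vector `x` viewed as a 3 × 3 × 3 array, with axis indices shifted down to start at 0. -/
def toArray {R : Type*} (x : Fin 27 → R) (i j k : Fin 3) : R :=
  x (colEquiv ((i, j), k))

lemma toArray_eq {R : Type*} (x : Fin 27 → R) :
    toArray x =
      ![![![x 0, x 1, x 2], ![x 3, x 4, x 5], ![x 6, x 7, x 8]],
        ![![x 9, x 10, x 11], ![x 12, x 13, x 14], ![x 15, x 16, x 17]],
        ![![x 18, x 19, x 20], ![x 21, x 22, x 23], ![x 24, x 25, x 26]]] := by
  ext i j k
  fin_cases i <;> fin_cases j <;> fin_cases k <;> rfl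

lemma toArray_injective {R : Type*} :
    Function.Injective (toArray : (Fin 27 → R) → Fin 3 → Fin 3 → Fin 3 → R) := by
  intro x y h
  ext n
  obtain ⟨⟨⟨i, j⟩, k⟩, rfl⟩ := colEquiv.surjective n
  exact congrFun₃ h i j k

lemma M_mulVec_eq_iff {x y : Fin 27 → ℤ} :
    M *ᵥ x = M *ᵥ y ↔ SameLineSums (toArray x) (toArray y) := by
  simp only [M, reindex_apply, submatrix_mulVec_equiv, Equiv.symm_symm, fromRows_mulVec,
    kronecker_one_kronecker_one_mulVec, one_kronecker_kronecker_one_mulVec,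
    one_kronecker_one_kronecker_mulVec, rOnes, of_apply, one_mul, Function.comp_apply,
    (Equiv.surjective _).injective_comp_right.eq_iff]
  simp [SameLineSums, toArray, funext_iff]

/-- The corner values `⟨(e, u, v, w), (a, b, c)⟩` other than `x₂₇`, ordered as `x₁`, its neighbours
`x₃, x₇, x₁₉`, and the neighbours `x₉, x₂₁, x₂₅` of `x₂₇`. A sigma type is used because the
admissible ranges of `a, b, c` depend on `u, v, w`. -/
abbrev CornerValues : Type := Σ _ : ℤ × ℤ × ℤ × ℤ, ℤ × ℤ × ℤ

/-- The entries of a vector at the seven corners of the array other than `x₂₇`. -/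
def corners (x : Fin 27 → ℤ) : CornerValues :=
  ⟨(x 0, x 2, x 6, x 18), (x 8, x 20, x 24)⟩

/-- The array with the line sums of `xp`, the given corner values and `x₂₇ = 0`. -/
def ofCorners : CornerValues → Fin 27 → ℤ
  | ⟨(e, u, v, w), (a, b, c)⟩ =>
    ![e, 1 - e - u, u,
      1 - e - v, 49 + e + u + v + a, 2 - u - a,
      v, 2 - v - a, a,
      1 - e - w, 49 + e + u + w + b, 2 - u - b,
      49 + e + v + w + c, 2659 - e - u - v - w - a - b - c, 102 + u + a + b,
      2 - v - c, 102 + v + a + c, 2 - a,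
      w, 2 - w - b, b,
      2 - w - c, 102 + w + b + c, 2 - b,
      c, 2 - c, 0]

lemma corners_ofCorners : Function.LeftInverse corners ofCorners := fun _ => rfl

lemma M_mulVec_ofCorners (q : CornerValues) : M *ᵥ ofCorners q = M *ᵥ xp := by
  obtain ⟨⟨e, u, v, w⟩, a, b, c⟩ := q
  rw [M_mulVec_eq_iff]
  simp only [SameLineSums, Fin.forall_fin_succ, Fin.sum_univ_three, toArray_eq, ofCorners, xp,
    Nat.succ_eq_add_one, Nat.reduceAdd, Fin.isValue, cons_val_zero, cons_val_one, cons_val,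
    cons_val', cons_val_fin_one, cons_val_succ, forall_const]
  omega

lemma ofCorners_corners {x : Fin 27 → ℤ} (hM : M *ᵥ x = M *ᵥ xp) (hx : x 26 = 0) :
    ofCorners (corners x) = x := by
  have hlines := M_mulVec_eq_iff.mp ((M_mulVec_ofCorners (corners x)).trans hM.symm)
  refine toArray_injective (hlines.eq_of_forall_ne 1 1 1 fun i j k hi hj hk => ?_)
  fin_cases i <;> fin_cases j <;> fin_cases k <;>
    first | contradiction | rfl | exact hx.symm

/-- The values of `(e, u, v, w)` occurring in nonnegative arrays. -/
def nearCorners : Finset (ℤ × ℤ × ℤ × ℤ) :=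
  insert (1, 0, 0, 0) ({0} ×ˢ {0, 1} ×ˢ {0, 1} ×ˢ {0, 1})

/-- The values of `(a, b, c)` occurring in nonnegative arrays, given `(e, u, v, w)`. -/
noncomputable def farCorners : ℤ × ℤ × ℤ × ℤ → Finset (ℤ × ℤ × ℤ)
  | (_, u, v, w) =>
    Finset.Icc 0 (2 - max u v) ×ˢ Finset.Icc 0 (2 - max u w) ×ˢ Finset.Icc 0 (2 - max v w)

lemma mem_nearCorners {e u v w : ℤ} :
    (e, u, v, w) ∈ nearCorners ↔
      (0 ≤ e ∧ 0 ≤ u ∧ 0 ≤ v ∧ 0 ≤ w) ∧ e + u ≤ 1 ∧ e + v ≤ 1 ∧ e + w ≤ 1 := by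
  simp only [nearCorners, Finset.mem_insert, Finset.mem_product, Finset.mem_singleton,
    Prod.mk.injEq]
  omega

lemma mem_farCorners {e u v w a b c : ℤ} :
    (a, b, c) ∈ farCorners (e, u, v, w) ↔
      (0 ≤ a ∧ u + a ≤ 2 ∧ v + a ≤ 2) ∧ (0 ≤ b ∧ u + b ≤ 2 ∧ w + b ≤ 2) ∧
        0 ≤ c ∧ v + c ≤ 2 ∧ w + c ≤ 2 := by
  simp only [farCorners, Finset.mem_product, Finset.mem_Icc]
  omega

lemma ofCorners_nonneg_iff (q : CornerValues) :
    0 ≤ ofCorners q ↔ q ∈ nearCorners.sigma farCorners := by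
  obtain ⟨⟨e, u, v, w⟩, a, b, c⟩ := q
  simp only [Pi.le_def, Fin.forall_fin_succ, Finset.mem_sigma, mem_nearCorners, mem_farCorners,
    ofCorners, Pi.zero_apply, Fin.isValue, cons_val_zero, cons_val_succ, cons_val_fin_one,
    forall_const]
  omega

lemma card_farCorners (e u v w : ℤ) :
    (farCorners (e, u, v, w)).card =
      (3 - max u v).toNat * ((3 - max u w).toNat * (3 - max v w).toNat) := by
  have hshift (t : ℤ) : 2 - t + 1 - 0 = 3 - t := by ring
  simp only [farCorners, Finset.card_product, Int.card_Icc, hshift]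

lemma card_sigma_farCorners : (nearCorners.sigma farCorners).card = 122 := by
  calc
    (nearCorners.sigma farCorners).card = ∑ q ∈ nearCorners, (farCorners q).card :=
      Finset.card_sigma _ _
    _ = 27 + ∑ u ∈ ({0, 1} : Finset ℤ), ∑ v ∈ ({0, 1} : Finset ℤ), ∑ w ∈ ({0, 1} : Finset ℤ),
          (3 - max u v).toNat * ((3 - max u w).toNat * (3 - max v w).toNat) := by
      simp [nearCorners, Finset.sum_product, card_farCorners]
    _ = 27 + (27 + 3 * 12 + 3 * 8 + 8) := by simp
    _ = 122 := by norm_num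

lemma le_two_of_nonneg_of_mulVec_eq {x : Fin 27 → ℤ} (hx : 0 ≤ x) (hM : M *ᵥ x = M *ᵥ xp) :
    x 8 ≤ 2 ∧ x 17 ≤ 2 ∧ x 20 ≤ 2 ∧ x 23 ≤ 2 ∧ x 24 ≤ 2 ∧ x 25 ≤ 2 := by
  have hnonneg (n : Fin 27) : 0 ≤ x n := hx n
  obtain ⟨hfst, hsnd, htrd⟩ := M_mulVec_eq_iff.mp hM
  simp only [Fin.sum_univ_three] at hfst hsnd htrd
  have hline₁ : x 8 + x 17 + x 26 = 2 := hfst 2 2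
  have hline₂ : x 20 + x 23 + x 26 = 2 := hsnd 2 2
  have hline₃ : x 24 + x 25 + x 26 = 2 := htrd 2 2
  grind

lemma setOf_nonneg_eq_image_ofCorners :
    {x : Fin 27 → ℤ | 0 ≤ x ∧ M *ᵥ x = M *ᵥ xp ∧ x 26 = 0} =
      ofCorners '' (nearCorners.sigma farCorners) := by
  ext x
  constructor
  · rintro ⟨hpos, hM, hx⟩
    have hcorners := ofCorners_corners hM hx
    exact ⟨corners x, (ofCorners_nonneg_iff _).mp (hcorners.symm ▸ hpos), hcorners⟩
  · rintro ⟨q, hq, rfl⟩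
    exact ⟨(ofCorners_nonneg_iff q).mpr hq, M_mulVec_ofCorners q, rfl⟩

/-- The set of nonnegative integer vectors \`x\` with \`M x = M x_p\`, \`x₂₇ = 0\`, and \`x₉, x₁₈, x₂₁, x₂₄, x₂₅, x₂₆ ≤ 2\` (block 222) has exactly 122 elements. -/
theorem block222_solution_count :
    {x : Fin 27 → ℤ | (∀ i, 0 ≤ x i) ∧ M.mulVec x = M.mulVec xp ∧ x 26 = 0 ∧ x 8 ≤ 2 ∧ x 17 ≤ 2 ∧ x 20 ≤ 2 ∧ x 23 ≤ 2 ∧ x 24 ≤ 2 ∧ x 25 ≤ 2}.ncard = 122 := by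
  calc
    _ = {x : Fin 27 → ℤ | 0 ≤ x ∧ M *ᵥ x = M *ᵥ xp ∧ x 26 = 0}.ncard := by
      congr 1
      ext x
      exact ⟨fun ⟨hx, hM, hlast, _⟩ => ⟨hx, hM, hlast⟩,
        fun ⟨hx, hM, hlast⟩ => ⟨hx, hM, hlast, le_two_of_nonneg_of_mulVec_eq hx hM⟩⟩
    _ = (ofCorners '' (nearCorners.sigma farCorners)).ncard := by
      rw [setOf_nonneg_eq_image_ofCorners]
    _ = (nearCorners.sigma farCorners).card := by
      rw [Set.ncard_image_of_injective _ corners_ofCorners.injective, Set.ncard_coe_finset]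
    _ = 122 := card_sigma_farCorners
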